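/- Let n ≥ 3 and let c ∈ ℝ with c ≠ 0. Consider the curve-germ with semigroup (3,7,11) in ℝ^{2n} (coordinates (p₁,q₁,p₂,q₂,p₃,q₃,…,pₙ,qₙ), all unlisted coordinates equal to 0) f(t) = (t³, t¹⁰ + c t¹¹, t⁷, 0, t¹¹, 0, …, 0). Then Lt(f) = 10. -/

import Mathlib

noncomputable section

/-- The order of vanishing at `0` of a function `h : ℝ → ℝ`: the least `k ≥ 1` such that
the `k`-th derivative of `h` at `0` is nonzero, and `∞` if all derivatives vanish at `0`. -/
def vanishOrder (h : ℝ → ℝ) : ℕ∞ :=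
  sInf {k : ℕ∞ | ∃ m : ℕ, k = m ∧ 1 ≤ m ∧ iteratedDeriv m h 0 ≠ 0}

/-- The standard symplectic form `ω = ∑ dpᵢ ∧ dqᵢ` on `ℝ^{2n}`, where the coordinates are
ordered as `(p₁, q₁, …, pₙ, qₙ)` (so `pᵢ` has index `2(i-1)` and `qᵢ` has index `2(i-1)+1`). -/
def stdSymp (n : ℕ) (u v : Fin (2 * n) → ℝ) : ℝ :=
  ∑ i : Fin n,
    (u ⟨2 * i.val, by have := i.isLt; omega⟩ * v ⟨2 * i.val + 1, by have := i.isLt; omega⟩ -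
     u ⟨2 * i.val + 1, by have := i.isLt; omega⟩ * v ⟨2 * i.val, by have := i.isLt; omega⟩)

/-- A germ at `0` of a smooth Lagrangian submanifold of `(ℝ^{2n}, ω)`, given by `n` smooth
functions `H₁, …, Hₙ` vanishing at `0`, whose differentials are linearly independent at the
points of `{H₁ = ⋯ = Hₙ = 0}` near `0`, and such that `ω` vanishes on `ker DH(x)` at every
such point. -/
structure LagrangianGerm (n : ℕ) : Type where
  H : Fin n → (Fin (2 * n) → ℝ) → ℝ
  smooth : ∀ i, ContDiff ℝ (⊤ : ℕ∞) (H i)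
  zero_at_zero : ∀ i, H i 0 = 0
  lagrangian : ∃ U : Set (Fin (2 * n) → ℝ), IsOpen U ∧ 0 ∈ U ∧
    ∀ x ∈ U, (∀ i, H i x = 0) →
      LinearIndependent ℝ (fun i => fderiv ℝ (H i) x) ∧
      ∀ u v : Fin (2 * n) → ℝ, (∀ i, fderiv ℝ (H i) x u = 0) →
        (∀ i, fderiv ℝ (H i) x v = 0) → stdSymp n u v = 0

/-- The tangency order `t(f, L)` of a curve `f` to a Lagrangian submanifold-germ `L`:
the minimum over `i` of the order of vanishing at `0` of `Hᵢ ∘ f`. -/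
def tOrd {n : ℕ} (f : ℝ → Fin (2 * n) → ℝ) (L : LagrangianGerm n) : ℕ∞ :=
  ⨅ i : Fin n, vanishOrder (fun t => L.H i (f t))

/-- The Lagrangian tangency order `Lt(f)` of a curve `f`. -/
def Lt1 {n : ℕ} (f : ℝ → Fin (2 * n) → ℝ) : ℕ∞ :=
  ⨆ L : LagrangianGerm n, tOrd f L

/-- The Lagrangian tangency order `Lt(f, g)` of a multi-germ of two curves. -/
def Lt2 {n : ℕ} (f g : ℝ → Fin (2 * n) → ℝ) : ℕ∞ :=
  ⨆ L : LagrangianGerm n, min (tOrd f L) (tOrd g L)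

/-- The Lagrangian tangency order `Lt(f, g, h)` of a multi-germ of three curves. -/
def Lt3 {n : ℕ} (f g h : ℝ → Fin (2 * n) → ℝ) : ℕ∞ :=
  ⨆ L : LagrangianGerm n, min (tOrd f L) (min (tOrd g L) (tOrd h L))

open Asymptotics Filter Polynomial Topology
open scoped ContDiff

/-!
Let `f(t) = tᵏ a + tˡ b + tᵏ⁺ˡ d + o(tᵏ⁺ˡ)` with `0 < k < l` and `k ∤ l`. If every equation `Hᵢ` of
a Lagrangian germ `L` vanishes along `f` to order greater than `k + l`, then the coefficients of
`tᵏ`, `t²ᵏ`, `tˡ` and `tᵏ⁺ˡ` in `Hᵢ ∘ f` give `DHᵢ(a) = 0`, `D²Hᵢ(a, a) = 0`, `DHᵢ(b) = 0` and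
`DHᵢ(d) + D²Hᵢ(a, b) = 0`, all at `0`. For a parametrization `ψ` of `L` by its tangent space with
`Dψ(0) = id`, these say that `a`, `b`, `D²ψ(a, a)` and `d - D²ψ(a, b)` are tangent to `L`.
Differentiating `ω(Dψ a, Dψ b) = 0` in the direction `a` yields
`ω(D²ψ(a, a), b) + ω(a, D²ψ(a, b)) = 0`, whence `ω(a, d) = 0`. In the class at hand `a = ∂p₁`,
`d = ∂q₁` and `ω(a, d) = 1`, so the order never exceeds `3 + 7`; `{q = 0}` attains it.
-/

section Taylor

theorem polynomial_coeff_zero_eq_zero_of_eval_isLittleO_pow {p : ℝ[X]} {N : ℕ}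
    (hp : (fun t => p.eval t) =o[𝓝[≠] 0] fun t : ℝ => t ^ N) : p.coeff 0 = 0 := by
  have pow_isBigO_one : (fun t : ℝ => t ^ N) =O[𝓝[≠] 0] fun _ => (1 : ℝ) :=
    (((continuous_pow N).tendsto 0).mono_left nhdsWithin_le_nhds).isBigO_one ℝ
  rw [coeff_zero_eq_eval_zero]
  exact tendsto_nhds_unique (p.continuous.continuousAt.mono_left nhdsWithin_le_nhds)
    ((isLittleO_one_iff ℝ).1 (hp.trans_isBigO pow_isBigO_one))

theorem polynomial_coeff_eq_zero_of_eval_isLittleO_pow {p : ℝ[X]} {N m : ℕ}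
    (hp : (fun t => p.eval t) =o[𝓝[≠] 0] fun t : ℝ => t ^ N) (hm : m ≤ N) : p.coeff m = 0 := by
  induction N generalizing p m with
  | zero => exact Nat.le_zero.1 hm ▸ polynomial_coeff_zero_eq_zero_of_eval_isLittleO_pow hp
  | succ N ih =>
    have coeff_zero := polynomial_coeff_zero_eq_zero_of_eval_isLittleO_pow hp
    have eval_divX : (fun t => p.divX.eval t) =o[𝓝[≠] 0] fun t : ℝ => t ^ N := by
      refine ((isBigO_refl (fun t : ℝ => t⁻¹) (𝓝[≠] 0)).mul_isLittleO hp).congr' ?_ ?_ <;>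
        filter_upwards [self_mem_nhdsWithin] with t (ht : t ≠ 0)
      · conv_lhs => rw [← divX_mul_X_add p, coeff_zero]
        simp [field]
      · simp [field, pow_succ']
    cases m with
    | zero => exact coeff_zero
    | succ m =>
      rw [← coeff_divX]
      exact ih eval_divX (Nat.le_of_succ_le_succ hm)

/-- The Taylor polynomial at `0`, as an element of `ℝ[X]` so that its coefficients can be
compared with those of other polynomials. -/
def taylorPolynomial (g : ℝ → ℝ) (N : ℕ) : ℝ[X] :=
  ∑ m ∈ Finset.range (N + 1), C (iteratedDeriv m g 0 / m.factorial) * X ^ m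

theorem coeff_taylorPolynomial (g : ℝ → ℝ) {N m : ℕ} (hm : m ≤ N) :
    (taylorPolynomial g N).coeff m = iteratedDeriv m g 0 / m.factorial := by
  simp [taylorPolynomial, coeff_X_pow, hm]

theorem isLittleO_sub_eval_taylorPolynomial {g : ℝ → ℝ} {N : ℕ} (hg : ContDiff ℝ N g) :
    (fun t => g t - (taylorPolynomial g N).eval t) =o[𝓝 0] fun t : ℝ => t ^ N := by
  have := taylor_isLittleO_univ (x₀ := 0) hg
  simp only [sub_zero] at this
  refine this.congr_left fun t => ?_
  simp only [taylor_within_apply, taylorPolynomial, eval_finsetSum, iteratedDerivWithin_univ]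
  congr 1
  refine Finset.sum_congr rfl fun m _ => ?_
  simp [field]

theorem isLittleO_pow_iff_iteratedDeriv_eq_zero {g : ℝ → ℝ} {N : ℕ} (hg : ContDiff ℝ N g) :
    g =o[𝓝 0] (fun t : ℝ => t ^ N) ↔ ∀ m ≤ N, iteratedDeriv m g 0 = 0 := by
  have taylor := isLittleO_sub_eval_taylorPolynomial hg
  constructor
  · intro hgN m hm
    have eval_isLittleO := (hgN.sub taylor).congr_left fun t => sub_sub_cancel (g t) _
    have coeff_eq_zero := polynomial_coeff_eq_zero_of_eval_isLittleO_pow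
      (eval_isLittleO.mono nhdsWithin_le_nhds) hm
    simpa [coeff_taylorPolynomial g hm, Nat.factorial_ne_zero] using coeff_eq_zero
  · intro hderiv
    have : taylorPolynomial g N = 0 := Finset.sum_eq_zero fun m hm => by
      rw [hderiv m (Finset.mem_range_succ_iff.1 hm)]; simp
    simpa [this] using taylor

end Taylor

section SecondOrder

variable {E : Type*} [NormedAddCommGroup E] [NormedSpace ℝ E]

theorem isLittleO_sub_sub_fderiv_sub_fderiv_fderiv {α : Type*} {𝓕 : Filter α} {H : E → ℝ}
    (hH : ContDiff ℝ 2 H) {x y : α → E} {g : α → ℝ} (hg : Tendsto g 𝓕 (𝓝 0))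
    (hx : x =O[𝓕] g) (hy : y =o[𝓕] g) :
    (fun t => H (x t + y t) - H (x t) - fderiv ℝ H 0 (y t) - fderiv ℝ (fderiv ℝ H) 0 (x t) (y t))
      =o[𝓕] fun t => g t * ‖y t‖ := by
  have mean_value (t : α) :
      ∃ z ∈ segment ℝ (x t) (x t + y t), H (x t + y t) - H (x t) = fderiv ℝ H z (y t) := by
    simpa using domain_mvt (s := Set.univ) (x := x t) (y := x t + y t)
      (fun z _ => (hH.differentiable two_ne_zero z).hasFDerivAt.hasFDerivWithinAt)
      convex_univ trivial trivial
  choose z hz hHz using mean_value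
  have hzx : (fun t => z t - x t) =o[𝓕] g := by
    refine IsBigO.trans_isLittleO (.of_norm_le (g := fun t => ‖y t‖) fun t => ?_) hy.norm_left
    simpa using norm_sub_le_of_mem_segment (hz t)
  have hzg : z =O[𝓕] g := (hzx.isBigO.add hx).congr_left fun t => sub_add_cancel _ _
  have fderiv_expansion :
      (fun t => fderiv ℝ H (z t) - fderiv ℝ H 0 - fderiv ℝ (fderiv ℝ H) 0 (z t)) =o[𝓕] g := by
    have hd : DifferentiableAt ℝ (fderiv ℝ H) 0 :=
      (hH.fderiv_right (m := 1) le_rfl).differentiable one_ne_zero 0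
    have := hd.hasFDerivAt.isLittleO.comp_tendsto (hzg.trans_tendsto hg)
    simp only [sub_zero, Function.comp_def] at this
    exact this.trans_isBigO hzg
  have operator_isLittleO :
      (fun t => fderiv ℝ H (z t) - fderiv ℝ H 0 - fderiv ℝ (fderiv ℝ H) 0 (x t)) =o[𝓕] g := by
    refine (fderiv_expansion.add
      (((fderiv ℝ (fderiv ℝ H) 0).isBigO_comp _ _).trans_isLittleO hzx)).congr_left fun t => ?_
    rw [map_sub]; abel
  refine IsBigO.trans_isLittleO (.of_norm_le fun t => ?_)
    (operator_isLittleO.norm_left.mul_isBigO (isBigO_refl (fun t => ‖y t‖) 𝓕))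
  rw [hHz]
  exact ContinuousLinearMap.le_opNorm (fderiv ℝ H (z t) - _ - _) (y t)

theorem iteratedDeriv_one_comp_smul {H : E → ℝ} (hH : Differentiable ℝ H) (a : E) :
    iteratedDeriv 1 (fun s : ℝ => H (s • a)) = fun s => fderiv ℝ H (s • a) a := by
  funext s
  rw [iteratedDeriv_one]
  refine ((hH _).hasFDerivAt.comp_hasDerivAt s ?_).deriv
  simpa using (hasDerivAt_id s).smul_const a

theorem iteratedDeriv_two_comp_smul {H : E → ℝ} (hH : ContDiff ℝ 2 H) (a : E) :
    iteratedDeriv 2 (fun s : ℝ => H (s • a)) = fun s => fderiv ℝ (fderiv ℝ H) (s • a) a a := by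
  funext s
  have hd : DifferentiableAt ℝ (fderiv ℝ H) (s • a) :=
    (hH.fderiv_right (m := 1) le_rfl).differentiable one_ne_zero _
  have smul_deriv : HasDerivAt (fun s : ℝ => s • a) a s := by
    simpa using (hasDerivAt_id s).smul_const a
  have fderiv_deriv := hd.hasFDerivAt.comp_hasDerivAt s smul_deriv
  rw [iteratedDeriv_succ, iteratedDeriv_one_comp_smul (hH.differentiable two_ne_zero)]
  simpa using (fderiv_deriv.clm_apply (hasDerivAt_const s a)).deriv

end SecondOrder

section SparseExpansion

variable {E : Type*} [NormedAddCommGroup E] [NormedSpace ℝ E]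

/-- `f(t) = tᵏ a + tˡ b + tᵏ⁺ˡ d + o(tᵏ⁺ˡ)` as `t → 0`: the jet of the curve `f` that decides its
contact with a Lagrangian submanifold. -/
def HasSparseExpansion (k l : ℕ) (a b d : E) (f : ℝ → E) : Prop :=
  (fun t => f t - (t ^ k • a + t ^ l • b + t ^ (k + l) • d)) =o[𝓝 0] fun t : ℝ => t ^ (k + l)

theorem isBigO_pow_pow_of_le {m n : ℕ} (h : m ≤ n) :
    (fun t : ℝ => t ^ n) =O[𝓝 0] fun t => t ^ m := by
  rcases h.eq_or_lt with rfl | h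
  · exact isBigO_refl _ _
  · exact (isLittleO_pow_pow h).isBigO

theorem isBigO_pow_smul_const (m : ℕ) (v : E) :
    (fun t : ℝ => t ^ m • v) =O[𝓝 0] fun t => t ^ m :=
  .of_bound ‖v‖ <| .of_forall fun t => by rw [norm_smul, mul_comm]

theorem tendsto_pow_nhds_zero {k : ℕ} (hk : 0 < k) :
    Tendsto (fun t : ℝ => t ^ k) (𝓝 0) (𝓝 0) := by
  simpa [hk.ne'] using (continuous_pow k).tendsto (0 : ℝ)

theorem comp_pow_smul_isLittleO {H : E → ℝ} {k N : ℕ} (hH : ContDiff ℝ N H) (hk : 0 < k) (a : E) :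
    (fun t : ℝ => H (t ^ k • a) - (expand ℝ k (taylorPolynomial (fun s => H (s • a)) N)).eval t)
      =o[𝓝 0] fun t => t ^ N := by
  have hline : ContDiff ℝ N fun s : ℝ => H (s • a) := by fun_prop
  have := (isLittleO_sub_eval_taylorPolynomial hline).comp_tendsto
    (tendsto_pow_nhds_zero hk)
  simp only [Function.comp_def, ← pow_mul, ← expand_eval] at this
  exact this.trans_isBigO (isBigO_pow_pow_of_le (Nat.le_mul_of_pos_left N hk))

namespace HasSparseExpansion

variable {k l : ℕ} {a b d : E} {f : ℝ → E}

theorem of_add_pow_succ_smul (k l : ℕ) (a b d e : E) :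
    HasSparseExpansion k l a b d fun t =>
      t ^ k • a + t ^ l • b + t ^ (k + l) • d + t ^ (k + l + 1) • e := by
  simpa only [HasSparseExpansion, add_sub_cancel_left] using
    (isBigO_pow_smul_const (k + l + 1) e).trans_isLittleO (isLittleO_pow_pow (Nat.lt_succ_self _))

theorem apply_zero (hf : HasSparseExpansion k l a b d f) (hk : 0 < k) (hl : 0 < l) : f 0 = 0 := by
  simpa [hk.ne', hl.ne'] using hf.isBigO.eq_zero_imp.self_of_nhds

theorem sub_sub_isBigO (hf : HasSparseExpansion k l a b d f) :
    (fun t => f t - t ^ k • a - t ^ l • b) =O[𝓝 0] fun t : ℝ => t ^ (k + l) :=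
  (hf.isBigO.add (isBigO_pow_smul_const (k + l) d)).congr_left fun t => by abel

theorem sub_isBigO (hf : HasSparseExpansion k l a b d f) :
    (fun t => f t - t ^ k • a) =O[𝓝 0] fun t : ℝ => t ^ l :=
  ((hf.sub_sub_isBigO.trans (isBigO_pow_pow_of_le (Nat.le_add_left l k))).add
    (isBigO_pow_smul_const l b)).congr_left fun t => by abel

/-- The Taylor polynomial of `H ∘ f` to order `k + l`, for `f` with the expansion above and
`0 < k < l`. The part supported on exponents divisible by `k` comes from the restriction of `H` to
the line through `a`. -/
def compPolynomial (H : E → ℝ) (k l : ℕ) (a b d : E) : ℝ[X] :=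
  expand ℝ k (taylorPolynomial (fun s => H (s • a)) (k + l)) + C (fderiv ℝ H 0 b) * X ^ l +
    C (fderiv ℝ H 0 d + fderiv ℝ (fderiv ℝ H) 0 a b) * X ^ (k + l)

theorem comp_isLittleO {H : E → ℝ} (hH : ContDiff ℝ (k + l : ℕ) H) (hk : 0 < k) (hkl : k < l)
    (hf : HasSparseExpansion k l a b d f) :
    (fun t => H (f t) - (compPolynomial H k l a b d).eval t)
      =o[𝓝 0] fun t : ℝ => t ^ (k + l) := by
  have hH₂ : ContDiff ℝ 2 H := hH.of_le (by exact_mod_cast (by omega : 2 ≤ k + l))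
  set D := fderiv ℝ H 0
  set D₂ := fderiv ℝ (fderiv ℝ H) 0
  have line := comp_pow_smul_isLittleO hH hk a
  have off_line : (fun t => H (f t) - H (t ^ k • a) - D (f t - t ^ k • a)
      - D₂ (t ^ k • a) (f t - t ^ k • a)) =o[𝓝 0] fun t : ℝ => t ^ (k + l) := by
    have := isLittleO_sub_sub_fderiv_sub_fderiv_fderiv hH₂
      (tendsto_pow_nhds_zero hk) (isBigO_pow_smul_const k a)
      (hf.sub_isBigO.trans_isLittleO (isLittleO_pow_pow hkl))
    simp only [add_sub_cancel] at this
    refine this.trans_isBigO ?_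
    simpa only [pow_add] using (isBigO_refl _ _).mul hf.sub_isBigO.norm_left
  have linear : (fun t => D (f t - (t ^ k • a + t ^ l • b + t ^ (k + l) • d)))
      =o[𝓝 0] fun t : ℝ => t ^ (k + l) := (D.isBigO_comp _ _).trans_isLittleO hf
  have bilinear : (fun t => D₂ (t ^ k • a) (f t - t ^ k • a - t ^ l • b))
      =o[𝓝 0] fun t : ℝ => t ^ (k + l) := by
    have := (isBigO_refl (fun t : ℝ => t ^ k) (𝓝 0)).mul
      (((D₂ a).isBigO_comp _ _).trans hf.sub_sub_isBigO)
    simp only [← pow_add] at this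
    simpa using this.trans_isLittleO (isLittleO_pow_pow (Nat.lt_add_of_pos_left hk))
  refine (((line.add off_line).add linear).add bilinear).congr_left fun t => ?_
  simp only [compPolynomial, eval_add, eval_mul, eval_C, eval_pow, eval_X, map_sub, map_add,
    map_smul, smul_apply, smul_eq_mul]
  ring

theorem fderiv_eq_zero_of_comp_isLittleO {H : E → ℝ} (hH : ContDiff ℝ (k + l : ℕ) H) (hk : 0 < k)
    (hkl : k < l) (hdvd : ¬ k ∣ l) (hf : HasSparseExpansion k l a b d f)
    (hHf : (fun t => H (f t)) =o[𝓝 0] fun t : ℝ => t ^ (k + l)) :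
    fderiv ℝ H 0 a = 0 ∧ fderiv ℝ (fderiv ℝ H) 0 a a = 0 ∧ fderiv ℝ H 0 b = 0 ∧
      fderiv ℝ H 0 d + fderiv ℝ (fderiv ℝ H) 0 a b = 0 := by
  have hH₂ : ContDiff ℝ 2 H := hH.of_le (by exact_mod_cast (by omega : 2 ≤ k + l))
  have eval_isLittleO := (hHf.sub (hf.comp_isLittleO hH hk hkl)).congr_left
    fun t => sub_sub_cancel (H (f t)) _
  have coeff_eq_zero {m : ℕ} (hm : m ≤ k + l) : (compPolynomial H k l a b d).coeff m = 0 :=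
    polynomial_coeff_eq_zero_of_eval_isLittleO_pow (eval_isLittleO.mono nhdsWithin_le_nhds) hm
  have h2k_ne_l : k * 2 ≠ l := fun h => hdvd ⟨2, h.symm⟩
  have hk_ndvd_add : ¬ k ∣ k + l := by rwa [Nat.dvd_add_right (dvd_refl k)]
  simp only [compPolynomial, coeff_add, coeff_C_mul, coeff_X_pow] at coeff_eq_zero
  refine ⟨?_, ?_, ?_, ?_⟩
  · have := coeff_eq_zero (m := k * 1) (by omega)
    rw [coeff_expand_mul' hk, coeff_taylorPolynomial _ (by omega),
      iteratedDeriv_one_comp_smul (hH₂.differentiable two_ne_zero)] at this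
    simpa [hkl.ne, show l ≠ 0 by omega] using this
  · have := coeff_eq_zero (m := k * 2) (by omega)
    rw [coeff_expand_mul' hk, coeff_taylorPolynomial _ (by omega),
      iteratedDeriv_two_comp_smul hH₂] at this
    simpa [h2k_ne_l, show k * 2 ≠ k + l by omega] using this
  · have := coeff_eq_zero (m := l) (by omega)
    rw [coeff_expand hk, if_neg hdvd] at this
    simpa [hk.ne'] using this
  · have := coeff_eq_zero (m := k + l) le_rfl
    rw [coeff_expand hk, if_neg hk_ndvd_add] at this
    simpa [hk.ne'] using this

end HasSparseExpansion

end SparseExpansion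

section LocalParametrization

variable {E F : Type*} [NormedAddCommGroup E] [NormedSpace ℝ E] [NormedAddCommGroup F]
  [NormedSpace ℝ F]

theorem range_pi_eq_top_of_linearIndependent {ι : Type*} [Finite ι] {ℓ : ι → E →L[ℝ] ℝ}
    (hℓ : LinearIndependent ℝ ℓ) : (ContinuousLinearMap.pi ℓ).range = ⊤ := by
  have hcoe : LinearIndependent ℝ fun i => (ℓ i : E → ℝ) :=
    hℓ.map' (LinearMap.ltoFun ℝ E ℝ ℝ ∘ₗ ContinuousLinearMap.coeLM ℝ)
      (LinearMap.ker_eq_bot.2 fun _ _ h => DFunLike.coe_injective h)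
  rw [← span_flip_eq_top_iff_linearIndependent.2 hcoe]
  exact (Submodule.span_eq (ContinuousLinearMap.pi ℓ).range).symm

theorem exists_contDiffAt_parametrization_of_range_fderiv_eq_top [CompleteSpace E]
    [FiniteDimensional ℝ F] {G : E → F} {p : E} {N : ℕ∞ω} (hG : ContDiffAt ℝ N G p) (hN : N ≠ 0)
    (hrange : (fderiv ℝ G p).range = ⊤) :
    ∃ ψ : (fderiv ℝ G p).ker → E, ψ 0 = p ∧ ContDiffAt ℝ N ψ 0 ∧
      fderiv ℝ ψ 0 = (fderiv ℝ G p).ker.subtypeL ∧ ∀ᶠ ξ in 𝓝 0, G (ψ ξ) = G p := by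
  have hstrict := hG.hasStrictFDerivAt hN
  have hker := (fderiv ℝ G p).ker_closedComplemented_of_finiteDimensional_range
  have : CompleteSpace F := FiniteDimensional.complete ℝ F
  refine ⟨hstrict.implicitFunctionOfComplemented _ _ hrange hker (G p),
    hstrict.implicitFunctionOfComplemented_apply_image hrange hker, ?_,
    (hstrict.to_implicitFunctionOfComplemented hrange hker).hasFDerivAt.fderiv, ?_⟩
  · set Φ := hstrict.implicitFunctionDataOfComplemented G _ hrange hker
    have hpt : Φ.prodFun Φ.pt = (G p, 0) := by simp [Φ]
    have hΦ := Φ.contDiffAt_implicitFunction (n := N) hG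
      (by simp only [Φ, HasStrictFDerivAt.implicitFunctionDataOfComplemented]; fun_prop) hN
    rw [hpt] at hΦ
    exact hΦ.comp (0 : (fderiv ℝ G p).ker) (contDiffAt_const.prodMk contDiffAt_id)
  · exact ((Continuous.prodMk_right (G p)).tendsto (0 : (fderiv ℝ G p).ker)).eventually
      (hstrict.map_implicitFunctionOfComplemented_eq hrange hker)

theorem eventually_fderiv_apply_fderiv_eq_zero {G : E → F} {K : Type*} [NormedAddCommGroup K]
    [NormedSpace ℝ K] {ψ : K → E} {ξ₀ : K} {y : F} (hG : Differentiable ℝ G)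
    (hψ : ContDiffAt ℝ 1 ψ ξ₀) (hGψ : ∀ᶠ ξ in 𝓝 ξ₀, G (ψ ξ) = y) :
    ∀ᶠ ξ in 𝓝 ξ₀, ∀ v, fderiv ℝ G (ψ ξ) (fderiv ℝ ψ ξ v) = 0 := by
  filter_upwards [hGψ.eventually_nhds, hψ.eventually (by simp)] with ξ hconst hψξ v
  have hcomp : fderiv ℝ (G ∘ ψ) ξ = 0 :=
    (EventuallyEq.fderiv_eq (f := fun _ => y) hconst).trans (fderiv_const_apply y)
  rw [fderiv_comp ξ (hG _) (hψξ.differentiableAt one_ne_zero)] at hcomp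
  exact DFunLike.congr_fun hcomp v

theorem fderiv_fderiv_apply_add_fderiv_apply_eq_zero {G : E → F} {K : Type*}
    [NormedAddCommGroup K] [NormedSpace ℝ K] {ψ : K → E} {ξ₀ : K} {y : F} (hG : ContDiff ℝ 2 G)
    (hψ : ContDiffAt ℝ 2 ψ ξ₀) (hGψ : ∀ᶠ ξ in 𝓝 ξ₀, G (ψ ξ) = y) (u v : K) :
    fderiv ℝ (fderiv ℝ G) (ψ ξ₀) (fderiv ℝ ψ ξ₀ u) (fderiv ℝ ψ ξ₀ v) +
      fderiv ℝ G (ψ ξ₀) (fderiv ℝ (fderiv ℝ ψ) ξ₀ u v) = 0 := by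
  have hdG : HasFDerivAt (fderiv ℝ G) (fderiv ℝ (fderiv ℝ G) (ψ ξ₀)) (ψ ξ₀) :=
    ((hG.fderiv_right (m := 1) le_rfl).differentiable one_ne_zero _).hasFDerivAt
  have hdψ : HasFDerivAt (fderiv ℝ ψ) (fderiv ℝ (fderiv ℝ ψ) ξ₀) ξ₀ :=
    ((hψ.fderiv_right (m := 1) le_rfl).differentiableAt one_ne_zero).hasFDerivAt
  have hchain := (hdG.comp ξ₀ (hψ.differentiableAt two_ne_zero).hasFDerivAt).clm_apply
    (hdψ.clm_apply (hasFDerivAt_const v ξ₀))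
  have hzero : HasFDerivAt (fun ξ => fderiv ℝ G (ψ ξ) (fderiv ℝ ψ ξ v)) (0 : K →L[ℝ] F) ξ₀ :=
    (hasFDerivAt_const (0 : F) ξ₀).congr_of_eventuallyEq <|
    (eventually_fderiv_apply_fderiv_eq_zero (hG.differentiable two_ne_zero)
      (hψ.of_le one_le_two) hGψ).mono fun ξ h => h v
  simpa [add_comm] using DFunLike.congr_fun (hchain.unique hzero) u

end LocalParametrization

section Symplectic

variable {n : ℕ}

/-- The position of the coordinate `pᵢ` in `(p₁, q₁, …, pₙ, qₙ)`; both are indexed from `0`. -/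
def pIndex (i : Fin n) : Fin (2 * n) := ⟨2 * i, by omega⟩

/-- The position of the coordinate `qᵢ` in `(p₁, q₁, …, pₙ, qₙ)`; both are indexed from `0`. -/
def qIndex (i : Fin n) : Fin (2 * n) := ⟨2 * i + 1, by omega⟩

theorem pIndex_ne_qIndex (i j : Fin n) : pIndex i ≠ qIndex j := by
  simp only [pIndex, qIndex, ne_eq, Fin.mk.injEq]
  omega

theorem qIndex_injective : Function.Injective (qIndex : Fin n → Fin (2 * n)) := fun i j h => by
  simp only [qIndex, Fin.mk.injEq] at h
  omega

theorem stdSymp_eq_sum (u v : Fin (2 * n) → ℝ) :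
    stdSymp n u v = ∑ i, (u (pIndex i) * v (qIndex i) - u (qIndex i) * v (pIndex i)) :=
  rfl

theorem stdSymp_single_qIndex (u : Fin (2 * n) → ℝ) (i : Fin n) :
    stdSymp n u (Pi.single (qIndex i) 1) = u (pIndex i) := by
  simp [stdSymp_eq_sum, Pi.single_apply, pIndex_ne_qIndex, qIndex_injective.eq_iff]

theorem stdSymp_sub_right (u v w : Fin (2 * n) → ℝ) :
    stdSymp n u (v - w) = stdSymp n u v - stdSymp n u w := by
  simp only [stdSymp, Pi.sub_apply, ← Finset.sum_sub_distrib]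
  exact Finset.sum_congr rfl fun i _ => by ring

theorem hasDerivAt_stdSymp {u v : ℝ → Fin (2 * n) → ℝ} {u' v' : Fin (2 * n) → ℝ} {s : ℝ}
    (hu : HasDerivAt u u' s) (hv : HasDerivAt v v' s) :
    HasDerivAt (fun s => stdSymp n (u s) (v s)) (stdSymp n u' (v s) + stdSymp n (u s) v') s := by
  rw [hasDerivAt_pi] at hu hv
  simp only [stdSymp, ← Finset.sum_add_distrib]
  refine HasDerivAt.fun_sum fun i _ => ?_
  exact (((hu _).mul (hv _)).sub ((hu _).mul (hv _))).congr_deriv (by ring)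

namespace LagrangianGerm

variable (L : LagrangianGerm n)

/-- The tangent space at `0`, encoded as the kernel of the derivative of `(H₁, …, Hₙ)`. -/
def tangentSpace : Submodule ℝ (Fin (2 * n) → ℝ) :=
  (fderiv ℝ (fun x i => L.H i x) 0).ker

theorem fderiv_pi_eq (x : Fin (2 * n) → ℝ) :
    fderiv ℝ (fun x i => L.H i x) x = ContinuousLinearMap.pi fun i => fderiv ℝ (L.H i) x :=
  fderiv_pi fun i => (L.smooth i).differentiable (by simp) x

theorem mem_tangentSpace {v : Fin (2 * n) → ℝ} :
    v ∈ L.tangentSpace ↔ ∀ i, fderiv ℝ (L.H i) 0 v = 0 := by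
  rw [tangentSpace, fderiv_pi_eq, LinearMap.mem_ker, funext_iff]
  rfl

theorem stdSymp_eq_zero_of_mem_tangentSpace {u v : Fin (2 * n) → ℝ} (hu : u ∈ L.tangentSpace)
    (hv : v ∈ L.tangentSpace) : stdSymp n u v = 0 := by
  obtain ⟨U, -, h0U, hL⟩ := L.lagrangian
  exact (hL 0 h0U L.zero_at_zero).2 u v (L.mem_tangentSpace.1 hu) (L.mem_tangentSpace.1 hv)

theorem exists_parametrization :
    ∃ ψ : L.tangentSpace → Fin (2 * n) → ℝ, ψ 0 = 0 ∧ ContDiffAt ℝ 2 ψ 0 ∧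
      fderiv ℝ ψ 0 = L.tangentSpace.subtypeL ∧ ∀ᶠ ξ in 𝓝 0, ∀ i, L.H i (ψ ξ) = 0 := by
  obtain ⟨U, -, h0U, hL⟩ := L.lagrangian
  have hG : ContDiffAt ℝ 2 (fun x i => L.H i x) 0 :=
    contDiffAt_pi.2 fun i => (contDiff_infty.1 (L.smooth i) 2).contDiffAt
  have hrange : (fderiv ℝ (fun x i => L.H i x) 0).range = ⊤ := by
    rw [fderiv_pi_eq]
    exact range_pi_eq_top_of_linearIndependent (hL 0 h0U L.zero_at_zero).1
  obtain ⟨ψ, hψ0, hψ, hdψ, hHψ⟩ :=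
    exists_contDiffAt_parametrization_of_range_fderiv_eq_top hG two_ne_zero hrange
  refine ⟨ψ, hψ0, hψ, hdψ, hHψ.mono fun ξ hξ i => ?_⟩
  simpa [L.zero_at_zero] using congrFun hξ i

theorem eventually_stdSymp_fderiv_eq_zero {K : Type*} [NormedAddCommGroup K] [NormedSpace ℝ K]
    {ψ : K → Fin (2 * n) → ℝ} (hψ0 : ψ 0 = 0) (hψ : ContDiffAt ℝ 1 ψ 0)
    (hHψ : ∀ᶠ ξ in 𝓝 0, ∀ i, L.H i (ψ ξ) = 0) :
    ∀ᶠ ξ in 𝓝 0, ∀ u v, stdSymp n (fderiv ℝ ψ ξ u) (fderiv ℝ ψ ξ v) = 0 := by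
  obtain ⟨U, hU, h0U, hL⟩ := L.lagrangian
  have hψU : ∀ᶠ ξ in 𝓝 0, ψ ξ ∈ U := hψ.continuousAt.eventually_mem (hU.mem_nhds (hψ0 ▸ h0U))
  have tangent : ∀ᶠ ξ in 𝓝 0, ∀ i v, fderiv ℝ (L.H i) (ψ ξ) (fderiv ℝ ψ ξ v) = 0 :=
    eventually_all.2 fun i => eventually_fderiv_apply_fderiv_eq_zero
      ((L.smooth i).differentiable (by simp)) hψ (hHψ.mono fun ξ hξ => hξ i)
  filter_upwards [hψU, hHψ, tangent] with ξ hξU hξ hξt u v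
  exact (hL _ hξU hξ).2 _ _ (fun i => hξt i u) fun i => hξt i v

theorem stdSymp_fderiv_fderiv_add_eq_zero {K : Type*} [NormedAddCommGroup K] [NormedSpace ℝ K]
    {ψ : K → Fin (2 * n) → ℝ} (hψ0 : ψ 0 = 0) (hψ : ContDiffAt ℝ 2 ψ 0)
    (hHψ : ∀ᶠ ξ in 𝓝 0, ∀ i, L.H i (ψ ξ) = 0) (w u v : K) :
    stdSymp n (fderiv ℝ (fderiv ℝ ψ) 0 w u) (fderiv ℝ ψ 0 v) +
      stdSymp n (fderiv ℝ ψ 0 u) (fderiv ℝ (fderiv ℝ ψ) 0 w v) = 0 := by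
  have hline : HasDerivAt (fun s : ℝ => s • w) w 0 := by
    simpa using (hasDerivAt_id (0 : ℝ)).smul_const w
  have hdψ (u : K) : HasDerivAt (fun s : ℝ => fderiv ℝ ψ (s • w) u)
      (fderiv ℝ (fderiv ℝ ψ) 0 w u) 0 := by
    have hd := ((hψ.fderiv_right (m := 1) le_rfl).differentiableAt one_ne_zero).hasFDerivAt
    have hcurve := hd.comp_hasDerivAt_of_eq 0 hline (zero_smul ℝ w).symm
    exact (hcurve.clm_apply (hasDerivAt_const (0 : ℝ) u)).congr_deriv (by simp)
  have hω := hasDerivAt_stdSymp (hdψ u) (hdψ v)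
  have hzero : (fun s : ℝ => stdSymp n (fderiv ℝ ψ (s • w) u) (fderiv ℝ ψ (s • w) v))
      =ᶠ[𝓝 0] fun _ => 0 := by
    have hline_tendsto : Tendsto (fun s : ℝ => s • w) (𝓝 0) (𝓝 0) := by
      simpa only [zero_smul] using hline.continuousAt.tendsto
    exact (hline_tendsto.eventually (L.eventually_stdSymp_fderiv_eq_zero hψ0
      (hψ.of_le one_le_two) hHψ)).mono fun s hs => hs u v
  simpa using hω.unique ((hasDerivAt_const 0 0).congr_of_eventuallyEq hzero)

theorem stdSymp_eq_zero_of_fderiv_fderiv {a b d : Fin (2 * n) → ℝ}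
    (ha : a ∈ L.tangentSpace) (hb : b ∈ L.tangentSpace)
    (haa : ∀ i, fderiv ℝ (fderiv ℝ (L.H i)) 0 a a = 0)
    (hab : ∀ i, fderiv ℝ (L.H i) 0 d + fderiv ℝ (fderiv ℝ (L.H i)) 0 a b = 0) :
    stdSymp n a d = 0 := by
  obtain ⟨ψ, hψ0, hψ, hdψ, hHψ⟩ := L.exists_parametrization
  set D₂ψ := fderiv ℝ (fderiv ℝ ψ) 0 ⟨a, ha⟩
  have hH₂ (i : Fin n) (v : L.tangentSpace) :
      fderiv ℝ (fderiv ℝ (L.H i)) 0 a v + fderiv ℝ (L.H i) 0 (D₂ψ v) = 0 := by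
    simpa [hψ0, hdψ] using fderiv_fderiv_apply_add_fderiv_apply_eq_zero
      (contDiff_infty.1 (L.smooth i) 2) hψ (hHψ.mono fun ξ hξ => hξ i) ⟨a, ha⟩ v
  have haa_mem : D₂ψ ⟨a, ha⟩ ∈ L.tangentSpace :=
    L.mem_tangentSpace.2 fun i => by simpa [haa i] using hH₂ i ⟨a, ha⟩
  have hab_mem : d - D₂ψ ⟨b, hb⟩ ∈ L.tangentSpace :=
    L.mem_tangentSpace.2 fun i => by rw [map_sub]; linarith [hH₂ i ⟨b, hb⟩, hab i]
  have hω := L.stdSymp_fderiv_fderiv_add_eq_zero hψ0 hψ hHψ ⟨a, ha⟩ ⟨a, ha⟩ ⟨b, hb⟩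
  simp only [hdψ, Submodule.subtypeL_apply] at hω
  have hadω := L.stdSymp_eq_zero_of_mem_tangentSpace ha hab_mem
  rw [stdSymp_sub_right] at hadω
  linarith [L.stdSymp_eq_zero_of_mem_tangentSpace haa_mem hb]

end LagrangianGerm

end Symplectic

section TangencyOrder

theorem add_one_le_vanishOrder_iff {g : ℝ → ℝ} {N : ℕ} (hg : ContDiff ℝ N g) (hg0 : g 0 = 0) :
    N + 1 ≤ vanishOrder g ↔ g =o[𝓝 0] fun t : ℝ => t ^ N := by
  rw [isLittleO_pow_iff_iteratedDeriv_eq_zero hg]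
  constructor
  · intro hN m hm
    rcases m.eq_zero_or_pos with rfl | hm_pos
    · simpa using hg0
    by_contra hne
    have hle : (N : ℕ∞) + 1 ≤ m := hN.trans (sInf_le ⟨m, rfl, hm_pos, hne⟩)
    exact hm.not_gt (by exact_mod_cast hle)
  · intro hderiv
    refine le_sInf ?_
    rintro _ ⟨m, rfl, -, hne⟩
    exact_mod_cast not_le.1 fun hm => hne (hderiv m hm)

variable {n : ℕ} {f : ℝ → Fin (2 * n) → ℝ}

theorem add_one_le_tOrd_iff {L : LagrangianGerm n} {N : ℕ} (hf : ContDiff ℝ N f) (hf0 : f 0 = 0) :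
    N + 1 ≤ tOrd f L ↔ ∀ i, (fun t => L.H i (f t)) =o[𝓝 0] fun t : ℝ => t ^ N := by
  rw [tOrd, le_iInf_iff]
  refine forall_congr' fun i => add_one_le_vanishOrder_iff ?_ ?_
  · exact (contDiff_infty.1 (L.smooth i) N).comp hf
  · rw [hf0, L.zero_at_zero]

/-- The Lagrangian subspace `{q₁ = ⋯ = qₙ = 0}`, the zero section of `T*ℝⁿ`. -/
def zeroSection (n : ℕ) : LagrangianGerm n where
  H i x := x (qIndex i)
  smooth i := by fun_prop
  zero_at_zero _ := rfl
  lagrangian := by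
    have fderiv_coord (i : Fin n) (x : Fin (2 * n) → ℝ) :
        fderiv ℝ (fun x : Fin (2 * n) → ℝ => x (qIndex i)) x = .proj (qIndex i) :=
      (ContinuousLinearMap.proj (R := ℝ) (φ := fun _ => ℝ) (qIndex i)).fderiv
    simp only [fderiv_coord, ContinuousLinearMap.proj_apply]
    refine ⟨Set.univ, isOpen_univ, Set.mem_univ _, fun _ _ _ => ⟨?_, fun u v hu hv => ?_⟩⟩
    · rw [Fintype.linearIndependent_iff]
      intro g hg i
      simpa [sum_apply, Pi.single_apply, qIndex_injective.eq_iff] using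
        DFunLike.congr_fun hg (Pi.single (qIndex i) 1)
    · simp [stdSymp_eq_sum, hu, hv]

theorem add_one_le_Lt1 {N : ℕ} (hf : ContDiff ℝ N f) (hf0 : f 0 = 0)
    (hq : ∀ i, (fun t => f t (qIndex i)) =o[𝓝 0] fun t : ℝ => t ^ N) : N + 1 ≤ Lt1 f :=
  le_iSup_of_le (zeroSection n) ((add_one_le_tOrd_iff hf hf0).2 hq)

namespace HasSparseExpansion

variable {k l : ℕ} {a b d : Fin (2 * n) → ℝ}

theorem Lt1_le (hf : HasSparseExpansion k l a b d f) (hfk : ContDiff ℝ (k + l : ℕ) f) (hk : 0 < k)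
    (hkl : k < l) (hdvd : ¬ k ∣ l) (had : stdSymp n a d ≠ 0) : Lt1 f ≤ (k + l : ℕ) := by
  refine iSup_le fun L => not_lt.1 fun hlt => had ?_
  have hHf := (add_one_le_tOrd_iff hfk (hf.apply_zero hk (hk.trans hkl))).1
    (Order.add_one_le_of_lt hlt)
  choose ha haa hb hab using fun i => hf.fderiv_eq_zero_of_comp_isLittleO
    (contDiff_infty.1 (L.smooth i) (k + l)) hk hkl hdvd (hHf i)
  exact L.stdSymp_eq_zero_of_fderiv_fderiv (L.mem_tangentSpace.2 ha) (L.mem_tangentSpace.2 hb)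
    haa hab

theorem le_Lt1 (hf : HasSparseExpansion k l a b d f) (hfk : ContDiff ℝ (k + l : ℕ) f) (hk : 0 < k)
    (hl : 0 < l) (ha : ∀ i, a (qIndex i) = 0) (hb : ∀ i, b (qIndex i) = 0) :
    (k + l : ℕ) ≤ Lt1 f := by
  obtain ⟨N, hN⟩ : ∃ N, k + l = N + 1 := ⟨k + l - 1, by omega⟩
  have hq (i : Fin n) : (fun t => f t (qIndex i)) =O[𝓝 0] fun t : ℝ => t ^ (k + l) := by
    simpa [ha, hb] using isBigO_pi.1 hf.sub_sub_isBigO (qIndex i)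
  rw [hN] at hfk hq ⊢
  exact add_one_le_Lt1 (hfk.of_le (by exact_mod_cast N.le_succ)) (hf.apply_zero hk hl)
    fun i => (hq i).trans_isLittleO (isLittleO_pow_pow N.lt_succ_self)

end HasSparseExpansion

theorem semigroup_3_7_11_class3_lagrangian_tangency_order_general {k l : ℕ}
    {a b d : Fin (2 * n) → ℝ} (hk : 0 < k) (hkl : k < l) (hdvd : ¬ k ∣ l)
    (hfk : ContDiff ℝ (k + l : ℕ) f) (hf : HasSparseExpansion k l a b d f)
    (ha : ∀ i, a (qIndex i) = 0) (hb : ∀ i, b (qIndex i) = 0) (had : stdSymp n a d ≠ 0) :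
    Lt1 f = (k + l : ℕ) :=
  (hf.Lt1_le hfk hk hkl hdvd had).antisymm (hf.le_Lt1 hfk hk (hk.trans hkl) ha hb)

theorem Lt1_add_pow_succ_smul {k l : ℕ} (hk : 0 < k) (hkl : k < l) (hdvd : ¬ k ∣ l) (i j : Fin n)
    (e : Fin (2 * n) → ℝ) :
    Lt1 (fun t => t ^ k • Pi.single (pIndex i) 1 + t ^ l • Pi.single (pIndex j) 1 +
      t ^ (k + l) • Pi.single (qIndex i) 1 + t ^ (k + l + 1) • e) = (k + l : ℕ) :=
  semigroup_3_7_11_class3_lagrangian_tangency_order_general hk hkl hdvd (by fun_prop)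
    (.of_add_pow_succ_smul k l _ _ _ e) (by simp [(pIndex_ne_qIndex _ _).symm])
    (by simp [(pIndex_ne_qIndex _ _).symm]) (by simp [stdSymp_single_qIndex])

end TangencyOrder

theorem semigroup_3_7_11_class3_curve_eq {n : ℕ} (hn : 3 ≤ n) (c : ℝ) :
    (fun (t : ℝ) (j : Fin (2 * n)) => if (j : ℕ) = 0 then t ^ 3 else
      if (j : ℕ) = 1 then t ^ 10 + c * t ^ 11 else if (j : ℕ) = 2 then t ^ 7 else
      if (j : ℕ) = 4 then t ^ 11 else (0 : ℝ)) =
    fun t => t ^ 3 • Pi.single (pIndex ⟨0, by omega⟩) 1 +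
      t ^ 7 • Pi.single (pIndex ⟨1, by omega⟩) 1 + t ^ 10 • Pi.single (qIndex ⟨0, by omega⟩) 1 +
      t ^ 11 • (c • Pi.single (qIndex ⟨0, by omega⟩) 1 + Pi.single (pIndex ⟨2, by omega⟩) 1) := by
  funext t j
  simp only [pIndex, qIndex, Pi.add_apply, Pi.smul_apply, Pi.single_apply, Fin.ext_iff, smul_eq_mul]
  split_ifs <;> first | omega | ring

/-- The Lagrangian tangency order of the symplectic class (3) of the curve-germ with
semigroup `(3,7,11)`. -/
theorem semigroup_3_7_11_class3_lagrangian_tangency_order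
    (n : ℕ) (hn : 3 ≤ n) (c : ℝ) (hc : c ≠ 0)
    (f : ℝ → Fin (2 * n) → ℝ)
    (hf : f = fun (t : ℝ) (j : Fin (2 * n)) => if (j : ℕ) = 0 then t ^ 3 else if (j : ℕ) = 1 then t ^ 10 + c * t ^ 11 else if (j : ℕ) = 2 then t ^ 7 else if (j : ℕ) = 4 then t ^ 11 else (0 : ℝ)) :
    Lt1 f = 10 := by
  rw [hf, semigroup_3_7_11_class3_curve_eq hn c]
  exact Lt1_add_pow_succ_smul (k := 3) (l := 7) (by norm_num) (by norm_num) (by norm_num) _ _ _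

end
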